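/- Let 0 < p < 1 and let Φ : M_m(ℂ) → M_n(ℂ) be a unital Schwarz map. Then for any positive definite A ∈ M_n(ℂ) and any invertible B ∈ M_m(ℂ): tr[(B* A^{-p} B)^{1/(2-p)}] ≥ tr[(Φ†(B)* Φ†(A)^{-p} Φ†(B))^{1/(2-p)}]. -/

import Mathlib

open Matrix
open scoped ComplexOrder

/-- Real power of a matrix, defined spectrally for Hermitian matrices (junk value `0` otherwise). -/
noncomputable def mpow {k : ℕ} (A : Matrix (Fin k) (Fin k) ℂ) (p : ℝ) : Matrix (Fin k) (Fin k) ℂ :=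
  if hA : A.IsHermitian then
    (hA.eigenvectorUnitary : Matrix (Fin k) (Fin k) ℂ) *
      Matrix.diagonal (fun i => ((hA.eigenvalues i ^ p : ℝ) : ℂ)) *
      (hA.eigenvectorUnitary : Matrix (Fin k) (Fin k) ℂ)ᴴ
  else 0

/-- A Schwarz map: `Φ(K*K) ≥ Φ(K)*Φ(K)` for all `K`. -/
def IsSchwarz {a b : ℕ} (Φ : Matrix (Fin a) (Fin a) ℂ →ₗ[ℂ] Matrix (Fin b) (Fin b) ℂ) : Prop :=
  ∀ K, (Φ (Kᴴ * K) - (Φ K)ᴴ * Φ K).PosSemidef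

/-- A positive map: sends positive semidefinite matrices to positive semidefinite matrices. -/
def IsPositiveMap {a b : ℕ} (Φ : Matrix (Fin a) (Fin a) ℂ →ₗ[ℂ] Matrix (Fin b) (Fin b) ℂ) : Prop :=
  ∀ X, X.PosSemidef → (Φ X).PosSemidef

/-- `Ψ` is the Hilbert–Schmidt adjoint of `Φ`: `⟨X, Φ Y⟩ = ⟨Ψ X, Y⟩`. -/
def IsHSAdjoint {a b : ℕ} (Φ : Matrix (Fin a) (Fin a) ℂ →ₗ[ℂ] Matrix (Fin b) (Fin b) ℂ)
    (Ψ : Matrix (Fin b) (Fin b) ℂ →ₗ[ℂ] Matrix (Fin a) (Fin a) ℂ) : Prop :=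
  ∀ X Y, (Xᴴ * Φ Y).trace = ((Ψ X)ᴴ * Y).trace

/-- Spectral form. -/
noncomputable def DD {k : ℕ} (U : Matrix (Fin k) (Fin k) ℂ) (f : Fin k → ℝ) :
    Matrix (Fin k) (Fin k) ℂ :=
  U * Matrix.diagonal (fun i => ((f i : ℝ) : ℂ)) * Uᴴ

lemma DD_herm {k : ℕ} (U : Matrix (Fin k) (Fin k) ℂ) (f : Fin k → ℝ) : (DD U f)ᴴ = DD U f := by
  unfold DD
  have : (Matrix.diagonal (fun i => ((f i : ℝ) : ℂ)))ᴴ = Matrix.diagonal (fun i => ((f i : ℝ) : ℂ)) := by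
    rw [diagonal_conjTranspose]; congr 1; ext i; simp
  rw [conjTranspose_mul, conjTranspose_mul, conjTranspose_conjTranspose, this, mul_assoc]

lemma DD_one {k : ℕ} (U : Matrix (Fin k) (Fin k) ℂ) (hU : U * Uᴴ = 1) :
    DD U (fun _ => 1) = 1 := by
  unfold DD; simp [hU]

lemma DD_mul {k : ℕ} (U : Matrix (Fin k) (Fin k) ℂ) (hU : Uᴴ * U = 1) (f g : Fin k → ℝ) :
    DD U f * DD U g = DD U (fun i => f i * g i) := by
  unfold DD
  calc _ = U * Matrix.diagonal (fun i => ((f i : ℝ) : ℂ)) * (Uᴴ * U) *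
        Matrix.diagonal (fun i => ((g i : ℝ) : ℂ)) * Uᴴ := by simp only [mul_assoc]
    _ = _ := by
      rw [hU, mul_one, mul_assoc U, diagonal_mul_diagonal]; simp

lemma DD_posSemidef {k : ℕ} (U : Matrix (Fin k) (Fin k) ℂ) (f : Fin k → ℝ) (hf : ∀ i, 0 ≤ f i) :
    (DD U f).PosSemidef := by
  unfold DD
  apply PosSemidef.mul_mul_conjTranspose_same
  rw [posSemidef_diagonal_iff]
  intro i
  exact_mod_cast hf i

lemma form_eq {k : ℕ} (X U W : Matrix (Fin k) (Fin k) ℂ) (f g : Fin k → ℝ) :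
    (Xᴴ * DD U f * X * DD W g).trace.re
      = ∑ i, ∑ j, f i * g j * Complex.normSq ((Uᴴ * X * W) i j) := by
  have h1 : (Xᴴ * DD U f * X * DD W g).trace =
      ((Uᴴ * X * W)ᴴ * Matrix.diagonal (fun i => ((f i : ℝ) : ℂ)) * ((Uᴴ * X * W) *
        Matrix.diagonal (fun i => ((g i : ℝ) : ℂ)))).trace := by
    unfold DD
    rw [conjTranspose_mul, conjTranspose_mul, conjTranspose_conjTranspose]
    calc _ = ((Xᴴ * (U * Matrix.diagonal (fun i => ((f i : ℝ) : ℂ)) * Uᴴ) * X * (W * Matrix.diagonal (fun i => ((g i : ℝ) : ℂ)))) * Wᴴ).trace := by simp only [mul_assoc]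
      _ = _ := by rw [trace_mul_comm]; simp only [mul_assoc]
  rw [h1]
  generalize Uᴴ * X * W = C
  simp only [trace, diag_apply, mul_apply (M := Cᴴ * _), mul_diagonal, conjTranspose_apply, Complex.re_sum]
  rw [Finset.sum_comm]
  refine Finset.sum_congr rfl fun i _ => Finset.sum_congr rfl fun j _ => ?_
  simp [Complex.normSq_apply]
  ring

lemma inner_eq {k : ℕ} (B M U W : Matrix (Fin k) (Fin k) ℂ) (hU : U * Uᴴ = 1) (hW : W * Wᴴ = 1) :
    (Bᴴ * M).trace.re
      = ∑ i, ∑ j, (((Uᴴ * B * W) i j).re * ((Uᴴ * M * W) i j).re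
          + ((Uᴴ * B * W) i j).im * ((Uᴴ * M * W) i j).im) := by
  have h1 : (Bᴴ * M).trace = ((Uᴴ * B * W)ᴴ * (Uᴴ * M * W)).trace := by
    rw [conjTranspose_mul, conjTranspose_mul, conjTranspose_conjTranspose]
    calc _ = (Bᴴ * (U * Uᴴ) * M * (W * Wᴴ)).trace := by simp [hU, hW]
      _ = ((Bᴴ * (U * Uᴴ) * M * W) * Wᴴ).trace := by simp only [mul_assoc]
      _ = _ := by rw [trace_mul_comm]; simp only [mul_assoc]
  rw [h1]
  generalize Uᴴ * B * W = C
  generalize Uᴴ * M * W = E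
  simp only [trace, diag_apply, mul_apply, conjTranspose_apply, Complex.re_sum]
  rw [Finset.sum_comm]
  refine Finset.sum_congr rfl fun i _ => Finset.sum_congr rfl fun j _ => ?_
  simp

lemma DD_trace {k : ℕ} (U : Matrix (Fin k) (Fin k) ℂ) (hU : Uᴴ * U = 1) (f : Fin k → ℝ) :
    (DD U f).trace.re = ∑ i, f i := by
  unfold DD
  rw [trace_mul_comm, ← mul_assoc, hU, one_mul, trace_diagonal, Complex.re_sum]
  simp

lemma spec {k : ℕ} (A : Matrix (Fin k) (Fin k) ℂ) (hA : A.IsHermitian) :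
    ∃ U : Matrix (Fin k) (Fin k) ℂ, ∃ a : Fin k → ℝ, Uᴴ * U = 1 ∧ U * Uᴴ = 1 ∧ A = DD U a ∧
      (∀ p, mpow A p = DD U (fun i => a i ^ p)) ∧ (A.PosSemidef → ∀ i, 0 ≤ a i) ∧
      (A.PosDef → ∀ i, 0 < a i) := by
  refine ⟨hA.eigenvectorUnitary, hA.eigenvalues, ?_, ?_, ?_, ?_, ?_, ?_⟩
  · exact Unitary.coe_star_mul_self hA.eigenvectorUnitary
  · exact Unitary.coe_mul_star_self hA.eigenvectorUnitary
  · conv_lhs => rw [hA.spectral_theorem]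
    rfl
  · intro p
    simp [mpow, hA, DD]
  · intro h i; exact h.eigenvalues_nonneg i
  · intro h i; exact h.eigenvalues_pos i

lemma scal1 (α β : ℝ) (hα : 0 ≤ α) (hβ : 0 ≤ β) (u v : ℂ) :
    α * β / (α + β) * Complex.normSq (u + v) ≤ α * Complex.normSq u + β * Complex.normSq v := by
  rcases eq_or_lt_of_le (add_nonneg hα hβ) with h | h
  · rw [← h]; simp
    have := Complex.normSq_nonneg u
    have := Complex.normSq_nonneg v
    positivity
  · rw [div_mul_eq_mul_div, div_le_iff₀ h]
    simp only [Complex.normSq_apply, Complex.add_re, Complex.add_im]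
    nlinarith [sq_nonneg (α * u.re - β * v.re), sq_nonneg (α * u.im - β * v.im)]

/-- parallel sum lower bound -/
lemma K_lower {k : ℕ} (U W : Matrix (Fin k) (Fin k) ℂ) (hU : U * Uᴴ = 1) (hW : W * Wᴴ = 1)
    (a z : Fin k → ℝ) (ha : ∀ i, 0 ≤ a i) (hz : ∀ i, 0 ≤ z i) (t : ℝ) (ht : 0 < t)
    (Y1 Y2 : Matrix (Fin k) (Fin k) ℂ) :
    ∑ i, ∑ j, a i * (t * z j) / (a i + t * z j) * Complex.normSq ((Uᴴ * (Y1 + Y2) * W) i j)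
      ≤ (Y1ᴴ * DD U a * Y1).trace.re + t * (Y2ᴴ * Y2 * DD W z).trace.re := by
  have e1 := form_eq Y1 U W a (fun _ => 1)
  have e2 := form_eq Y2 U W (fun _ => 1) z
  rw [DD_one W hW, mul_one] at e1
  rw [DD_one U hU, mul_one] at e2
  rw [e1, e2, Finset.mul_sum, ← Finset.sum_add_distrib]
  refine Finset.sum_le_sum fun i _ => ?_
  rw [Finset.mul_sum, ← Finset.sum_add_distrib]
  refine Finset.sum_le_sum fun j _ => ?_
  have := scal1 (a i) (t * z j) (ha i) (mul_nonneg ht.le (hz j)) ((Uᴴ * Y1 * W) i j) ((Uᴴ * Y2 * W) i j)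
  rw [mul_add, add_mul, Matrix.add_apply]
  linarith

lemma K_attain {k : ℕ} (U W : Matrix (Fin k) (Fin k) ℂ) (hU : U * Uᴴ = 1) (hW : W * Wᴴ = 1)
    (hU' : Uᴴ * U = 1) (hW' : Wᴴ * W = 1)
    (a z : Fin k → ℝ) (ha : ∀ i, 0 ≤ a i) (hz : ∀ i, 0 ≤ z i) (t : ℝ) (ht : 0 < t)
    (X : Matrix (Fin k) (Fin k) ℂ) :
    ∃ X1 X2, X = X1 + X2 ∧ (X1ᴴ * DD U a * X1).trace.re + t * (X2ᴴ * X2 * DD W z).trace.re =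
    ∑ i, ∑ j, a i * (t * z j) / (a i + t * z j) * Complex.normSq ((Uᴴ * X * W) i j) := by
  set C := Uᴴ * X * W with hC
  let C1 : Matrix (Fin k) (Fin k) ℂ := Matrix.of fun i j => ((t * z j / (a i + t * z j) : ℝ) : ℂ) * C i j
  have hX : X = U * C * Wᴴ := by
    rw [hC]
    calc X = (U * Uᴴ) * X * (W * Wᴴ) := by simp [hU, hW]
      _ = _ := by simp only [mul_assoc]
  have back : ∀ E : Matrix (Fin k) (Fin k) ℂ, Uᴴ * (U * E * Wᴴ) * W = E := by
    intro E
    calc _ = (Uᴴ * U) * E * (Wᴴ * W) := by simp only [mul_assoc]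
      _ = E := by simp [hU', hW']
  refine ⟨U * C1 * Wᴴ, U * (C - C1) * Wᴴ, ?_, ?_⟩
  · rw [hX]; simp [mul_sub, sub_mul]
  have e1 := form_eq (U * C1 * Wᴴ) U W a (fun _ => 1)
  have e2 := form_eq (U * (C - C1) * Wᴴ) U W (fun _ => 1) z
  rw [DD_one W hW, mul_one] at e1
  rw [DD_one U hU, mul_one] at e2
  rw [e1, e2, Finset.mul_sum, ← Finset.sum_add_distrib]
  refine Finset.sum_congr rfl fun i _ => ?_
  rw [Finset.mul_sum, ← Finset.sum_add_distrib]
  refine Finset.sum_congr rfl fun j _ => ?_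
  rw [back, back]
  have h1 : C1 i j = ((t * z j / (a i + t * z j) : ℝ) : ℂ) * C i j := rfl
  rcases eq_or_lt_of_le (add_nonneg (ha i) (mul_nonneg ht.le (hz j))) with h | h
  · have h2 := mul_nonneg ht.le (hz j)
    have ha0 : a i = 0 := by linarith [ha i]
    have hz0 : t * z j = 0 := by linarith [ha i]
    have hz0' : z j = 0 := by simpa [ht.ne'] using hz0
    simp [ha0, hz0']
  · have h3 : C i j - C1 i j = ((a i / (a i + t * z j) : ℝ) : ℂ) * C i j := by
      have : ((a i / (a i + t * z j) : ℝ) : ℂ) = 1 - ((t * z j / (a i + t * z j) : ℝ) : ℂ) := by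
        rw [← Complex.ofReal_one, ← Complex.ofReal_sub]; congr 1; field_simp; ring
      rw [h1, this]; ring
    rw [Matrix.sub_apply, h3, h1, Complex.normSq_mul, Complex.normSq_mul, Complex.normSq_ofReal, Complex.normSq_ofReal]
    field_simp
    ring

open MeasureTheory Set in
lemma interp {k l : ℕ} (p : ℝ) (hp0 : 0 < p) (hp1 : p < 1)
    (a z : Fin k → ℝ) (ha : ∀ i, 0 ≤ a i) (hz : ∀ i, 0 ≤ z i) (c : Fin k → Fin k → ℝ)
    (a' z' : Fin l → ℝ) (ha' : ∀ i, 0 ≤ a' i) (hz' : ∀ i, 0 ≤ z' i) (c' : Fin l → Fin l → ℝ)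
    (h : ∀ t : ℝ, 0 < t → ∑ i, ∑ j, a i * (t * z j) / (a i + t * z j) * c i j ≤
      ∑ i, ∑ j, a' i * (t * z' j) / (a' i + t * z' j) * c' i j) :
    ∑ i, ∑ j, a i ^ p * z j ^ (1 - p) * c i j ≤ ∑ i, ∑ j, a' i ^ p * z' j ^ (1 - p) * c' i j := by
  have hp : p ∈ Ioo (0:ℝ) 1 := ⟨hp0, hp1⟩
  set κ := ∫ t in Ioi 0, Real.rpowIntegrand₀₁ p t 1 with hκ
  have hκ0 : 0 < κ := Real.integral_rpowIntegrand₀₁_one_pos hp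
  have key : ∀ (k : ℕ) (a z : Fin k → ℝ) (ha : ∀ i, 0 ≤ a i) (hz : ∀ i, 0 ≤ z i)
      (c : Fin k → Fin k → ℝ),
      IntegrableOn (fun t => ∑ i, ∑ j, (z j * c i j) * Real.rpowIntegrand₀₁ p t (a i / z j)) (Ioi 0) ∧
      (∫ t in Ioi 0, ∑ i, ∑ j, (z j * c i j) * Real.rpowIntegrand₀₁ p t (a i / z j))
        = (∑ i, ∑ j, a i ^ p * z j ^ (1 - p) * c i j) * κ ∧
      (∀ t : ℝ, 0 < t → (∑ i, ∑ j, (z j * c i j) * Real.rpowIntegrand₀₁ p t (a i / z j)) =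
        t ^ (p - 2) * ∑ i, ∑ j, a i * (t * z j) / (a i + t * z j) * c i j) := by
    intro k a z ha hz c
    have hint : ∀ i j, IntegrableOn (fun t => (z j * c i j) * Real.rpowIntegrand₀₁ p t (a i / z j)) (Ioi 0) := by
      intro i j
      exact (Real.integrableOn_rpowIntegrand₀₁_Ioi hp (div_nonneg (ha i) (hz j))).const_mul _
    refine ⟨integrable_finsetSum _ fun i _ => integrable_finsetSum _ fun j _ => hint i j, ?_, ?_⟩
    · rw [integral_finsetSum _ (fun i _ => integrable_finsetSum _ fun j _ => hint i j), Finset.sum_mul]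
      refine Finset.sum_congr rfl fun i _ => ?_
      rw [integral_finsetSum _ (fun j _ => hint i j), Finset.sum_mul]
      refine Finset.sum_congr rfl fun j _ => ?_
      rw [integral_const_mul, Real.integral_rpowIntegrand₀₁_eq_rpow_mul_const hp (div_nonneg (ha i) (hz j))]
      rcases eq_or_lt_of_le (hz j) with hz0 | hz0
      · rw [← hz0, Real.zero_rpow (by linarith)]; simp
      · rw [Real.div_rpow (ha i) (hz j), Real.rpow_sub hz0, Real.rpow_one]
        ring
    · intro t ht
      rw [Finset.mul_sum]
      refine Finset.sum_congr rfl fun i _ => ?_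
      rw [Finset.mul_sum]
      refine Finset.sum_congr rfl fun j _ => ?_
      rw [Real.rpowIntegrand₀₁_eq_pow_div hp ht.le (div_nonneg (ha i) (hz j))]
      rcases eq_or_lt_of_le (hz j) with hz0 | hz0
      · rw [← hz0]; simp
      · have : t ^ (p - 1) = t ^ (p - 2) * t := by
          rw [← Real.rpow_add_one ht.ne']; congr 1; ring
        rw [this]
        have h1 : 0 < t + a i / z j := by have := ha i; positivity
        have h2 : 0 < a i + t * z j := by have := ha i; positivity
        have h3 : a i + t * z j = (t + a i / z j) * z j := by field_simp; ring
        rw [h3]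
        field_simp
  obtain ⟨i1, e1, f1⟩ := key k a z ha hz c
  obtain ⟨i2, e2, f2⟩ := key l a' z' ha' hz' c'
  refine le_of_mul_le_mul_right ?_ hκ0
  rw [← e1, ← e2]
  refine setIntegral_mono_on i1 i2 measurableSet_Ioi fun t ht => ?_
  rw [f1 t ht, f2 t ht]
  exact mul_le_mul_of_nonneg_left (h t ht) (Real.rpow_nonneg (le_of_lt ht) _)

lemma tr_nonneg {k : ℕ} (A M : Matrix (Fin k) (Fin k) ℂ) (hA : A.PosSemidef) (hM : M.PosSemidef) :
    0 ≤ (A * M).trace.re := by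
  obtain ⟨U, a, -, -, hA1, -, ha, -⟩ := spec A hA.1
  obtain ⟨V, b, -, -, hM1, -, hb, -⟩ := spec M hM.1
  have := form_eq 1 U V a b
  rw [← hA1, ← hM1] at this
  simp only [conjTranspose_one, one_mul, mul_one] at this
  rw [this]
  exact Finset.sum_nonneg fun i _ => Finset.sum_nonneg fun j _ =>
    mul_nonneg (mul_nonneg (ha hA i) (hb hM j)) (Complex.normSq_nonneg _)

lemma psd_map {m n : ℕ} (Φ : Matrix (Fin m) (Fin m) ℂ →ₗ[ℂ] Matrix (Fin n) (Fin n) ℂ)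
    (hΦ : IsSchwarz Φ) (K : Matrix (Fin m) (Fin m) ℂ) : (Φ (Kᴴ * K)).PosSemidef := by
  have := (hΦ K).add (posSemidef_conjTranspose_mul_self (Φ K))
  simpa using this

lemma schwarz_star {m n : ℕ} (Φ : Matrix (Fin m) (Fin m) ℂ →ₗ[ℂ] Matrix (Fin n) (Fin n) ℂ)
    (hΦ : IsSchwarz Φ) (K : Matrix (Fin m) (Fin m) ℂ) : Φ Kᴴ = (Φ K)ᴴ := by
  have h1 : (Φ (1 : Matrix (Fin m) (Fin m) ℂ))ᴴ = Φ 1 := by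
    have := (psd_map Φ hΦ 1).1
    simpa using this.eq
  have h : ∀ K, (Φ K)ᴴ + (Φ Kᴴ)ᴴ = Φ K + Φ Kᴴ := by
    intro K
    have e1 := (psd_map Φ hΦ (K + 1)).1.eq
    have e2 := (psd_map Φ hΦ K).1.eq
    simp only [conjTranspose_add, conjTranspose_one, add_mul, mul_add, mul_one, one_mul, map_add] at e1
    rw [e2, h1] at e1
    have e3 := congrArg (fun M => M - Φ (Kᴴ * K) - Φ 1) e1
    calc _ = Φ (Kᴴ * K) + (Φ K)ᴴ + ((Φ Kᴴ)ᴴ + Φ 1) - Φ (Kᴴ * K) - Φ 1 := by abel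
      _ = _ := by rw [e3]; abel
  have ha := h K
  have hb := h (Complex.I • K)
  simp only [conjTranspose_smul, map_smul, RCLike.star_def, Complex.conj_I] at hb
  ext i j
  have ha' := congrFun (congrFun ha i) j
  have hb' := congrFun (congrFun hb i) j
  simp only [Matrix.add_apply, Matrix.smul_apply, smul_eq_mul, conjTranspose_apply, RCLike.star_def, map_neg, Complex.conj_I] at ha' hb' ⊢
  have hI := Complex.I_mul_I
  linear_combination (-1/2 : ℂ) * ha' - (1/2 : ℂ) * Complex.I * hb' + (1 / 2 : ℂ) * (- (starRingEnd ℂ) (Φ K j i) + (starRingEnd ℂ) (Φ Kᴴ j i) - Φ K i j + Φ Kᴴ i j) * hI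

lemma psi_psd {m n : ℕ} (Φ : Matrix (Fin m) (Fin m) ℂ →ₗ[ℂ] Matrix (Fin n) (Fin n) ℂ)
    (Ψ : Matrix (Fin n) (Fin n) ℂ →ₗ[ℂ] Matrix (Fin m) (Fin m) ℂ)
    (hΦ : IsSchwarz Φ) (hadj : IsHSAdjoint Φ Ψ) (A : Matrix (Fin n) (Fin n) ℂ)
    (hA : A.PosSemidef) : (Ψ A).PosSemidef := by
  have herm : (Ψ A)ᴴ = Ψ A := by
    rw [Matrix.ext_iff_trace_mul_right]
    intro Y
    rw [← hadj A Y, hA.1.eq]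
    have h2 := congrArg star (hadj A Yᴴ)
    rw [← trace_conjTranspose, ← trace_conjTranspose, conjTranspose_mul, conjTranspose_mul,
      schwarz_star Φ hΦ] at h2
    simp only [conjTranspose_conjTranspose] at h2
    rw [trace_mul_comm, h2, trace_mul_comm]
  apply PosSemidef.of_dotProduct_mulVec_nonneg herm
  intro x
  have hre : star x ⬝ᵥ (Ψ A *ᵥ x) = (Aᴴ * Φ (vecMulVec x (star x))).trace := by
    rw [hadj, herm, mul_vecMulVec, trace_vecMulVec, dotProduct_comm]
  have hpsd : (Φ (vecMulVec x (star x))).PosSemidef := by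
    obtain ⟨U, a, hU, -, hX, -, ha, -⟩ := spec _ (posSemidef_vecMulVec_self_star x).1
    have ha := ha (posSemidef_vecMulVec_self_star x)
    have hK : vecMulVec x (star x) = (DD U fun i => Real.sqrt (a i))ᴴ * DD U fun i => Real.sqrt (a i) := by
      rw [DD_herm, DD_mul U hU, hX]
      congr 1
      ext i
      exact (Real.mul_self_sqrt (ha i)).symm
    rw [hK]
    exact psd_map Φ hΦ _
  have him : (star x ⬝ᵥ (Ψ A *ᵥ x)).im = 0 := by
    have := Matrix.IsHermitian.im_star_dotProduct_mulVec_self (A := Ψ A) herm x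
    simpa using this
  rw [Complex.nonneg_iff]
  refine ⟨?_, him.symm⟩
  rw [hre, hA.1.eq]
  exact tr_nonneg _ _ hA hpsd

lemma form2 {m n : ℕ} (Φ : Matrix (Fin m) (Fin m) ℂ →ₗ[ℂ] Matrix (Fin n) (Fin n) ℂ)
    (Ψ : Matrix (Fin n) (Fin n) ℂ →ₗ[ℂ] Matrix (Fin m) (Fin m) ℂ)
    (hΦ : IsSchwarz Φ) (hadj : IsHSAdjoint Φ Ψ) (A : Matrix (Fin n) (Fin n) ℂ)
    (hA : A.PosSemidef) (X : Matrix (Fin m) (Fin m) ℂ) :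
    ((Φ X)ᴴ * Φ X * A).trace.re ≤ (Xᴴ * X * Ψ A).trace.re := by
  have h1 := tr_nonneg _ _ hA (hΦ X)
  have h2 := hadj A (Xᴴ * X)
  rw [hA.1.eq, (psi_psd Φ Ψ hΦ hadj A hA).1.eq] at h2
  rw [mul_sub, trace_sub, h2, Complex.sub_re, trace_mul_comm, trace_mul_comm A] at h1
  linarith

lemma form1 {m n : ℕ} (Φ : Matrix (Fin m) (Fin m) ℂ →ₗ[ℂ] Matrix (Fin n) (Fin n) ℂ)
    (Ψ : Matrix (Fin n) (Fin n) ℂ →ₗ[ℂ] Matrix (Fin m) (Fin m) ℂ)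
    (hΦ : IsSchwarz Φ) (hadj : IsHSAdjoint Φ Ψ) (A : Matrix (Fin n) (Fin n) ℂ)
    (hA : A.PosSemidef) (X : Matrix (Fin m) (Fin m) ℂ) :
    ((Φ X)ᴴ * A * Φ X).trace.re ≤ (Xᴴ * Ψ A * X).trace.re := by
  have h1 := form2 Φ Ψ hΦ hadj A hA Xᴴ
  rw [schwarz_star Φ hΦ] at h1
  simp only [conjTranspose_conjTranspose] at h1
  rw [trace_mul_cycle, trace_mul_cycle Xᴴ]
  exact h1

/-- Lieb-type monotonicity. -/
lemma lieb {m n : ℕ} (p : ℝ) (hp0 : 0 < p) (hp1 : p < 1)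
    (Φ : Matrix (Fin m) (Fin m) ℂ →ₗ[ℂ] Matrix (Fin n) (Fin n) ℂ)
    (Ψ : Matrix (Fin n) (Fin n) ℂ →ₗ[ℂ] Matrix (Fin m) (Fin m) ℂ)
    (hΦ : IsSchwarz Φ) (hadj : IsHSAdjoint Φ Ψ) 
    (U W : Matrix (Fin n) (Fin n) ℂ) (hU : U * Uᴴ = 1) (hW : W * Wᴴ = 1)
    (a z : Fin n → ℝ) (ha : ∀ i, 0 ≤ a i) (hz : ∀ i, 0 ≤ z i)
    (U' W' : Matrix (Fin m) (Fin m) ℂ) (hU' : U' * U'ᴴ = 1) (hW' : W' * W'ᴴ = 1)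
    (hU'' : U'ᴴ * U' = 1) (hW'' : W'ᴴ * W' = 1)
    (a' z' : Fin m → ℝ) (ha' : ∀ i, 0 ≤ a' i) (hz' : ∀ i, 0 ≤ z' i)
    (hA : Ψ (DD U a) = DD U' a') (hZ : Ψ (DD W z) = DD W' z')
    (X : Matrix (Fin m) (Fin m) ℂ) :
    ∑ i, ∑ j, a i ^ p * z j ^ (1 - p) * Complex.normSq ((Uᴴ * Φ X * W) i j) ≤
    ∑ i, ∑ j, a' i ^ p * z' j ^ (1 - p) * Complex.normSq ((U'ᴴ * X * W') i j) := by
  apply interp p hp0 hp1 a z ha hz _ a' z' ha' hz'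
  intro t ht
  obtain ⟨X1, X2, hX, h⟩ := K_attain U' W' hU' hW' hU'' hW'' a' z' ha' hz' t ht X
  rw [← h, hX, map_add]
  refine (K_lower U W hU hW a z ha hz t ht (Φ X1) (Φ X2)).trans ?_
  have h1 := form1 Φ Ψ hΦ hadj _ (DD_posSemidef U a ha) X1
  have h2 := form2 Φ Ψ hΦ hadj _ (DD_posSemidef W z hz) X2
  rw [hA] at h1
  rw [hZ] at h2
  have := mul_le_mul_of_nonneg_left h2 ht.le
  linarith

lemma young (p y z : ℝ) (hp0 : 0 < p) (hp1 : p < 1) (hy : 0 ≤ y) (hz : 0 < z) :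
    y ^ (1 / (2 - p)) ≤ 1 / (2 - p) * (y * z ^ (p - 1)) + (1 - 1 / (2 - p)) * z := by
  have h2 : 0 < 2 - p := by linarith
  have hq1 : 1 / (2 - p) ≤ 1 := by rw [div_le_one h2]; linarith
  have := Real.geom_mean_le_arith_mean2_weighted (w₁ := 1 / (2 - p)) (w₂ := 1 - 1 / (2 - p))
    (p₁ := y * z ^ (p - 1)) (p₂ := z) (by positivity) (by linarith) (by positivity) hz.le (by ring)
  refine le_trans (le_of_eq ?_) this
  rw [Real.mul_rpow hy (by positivity), ← Real.rpow_mul hz.le, mul_assoc, ← Real.rpow_add hz]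
  have : (p - 1) * (1 / (2 - p)) + (1 - 1 / (2 - p)) = 0 := by field_simp; ring
  rw [this]; simp

lemma young_trace {k : ℕ} (p : ℝ) (hp0 : 0 < p) (hp1 : p < 1)
    (V W : Matrix (Fin k) (Fin k) ℂ) (hV : V * Vᴴ = 1) (hW : W * Wᴴ = 1)
    (hV' : Vᴴ * V = 1) (hW' : Wᴴ * W = 1) (y z : Fin k → ℝ) (hy : ∀ i, 0 ≤ y i) (hz : ∀ i, 0 ≤ z i)
    (hsupp : DD V y * DD W (fun j => if z j = 0 then 1 else 0) = 0) :
    ∑ i, y i ^ (1 / (2 - p)) ≤ 1 / (2 - p) * (DD V y * DD W (fun j => z j ^ (p - 1))).trace.re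
      + (1 - 1 / (2 - p)) * ∑ j, z j := by
  have h2 : 0 < 2 - p := by linarith
  have e1 := form_eq 1 V W (fun i => y i ^ (1 / (2 - p))) (fun _ => 1)
  have e2 := form_eq 1 V W y (fun j => z j ^ (p - 1))
  have e3 := form_eq 1 V W (fun _ => 1) z
  rw [DD_one W hW] at e1
  rw [DD_one V hV] at e3
  simp only [conjTranspose_one, one_mul, mul_one] at e1 e2 e3
  rw [DD_trace V hV'] at e1
  rw [DD_trace W hW'] at e3
  rw [e1, e2, e3, Finset.mul_sum, Finset.mul_sum, ← Finset.sum_add_distrib]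
  refine Finset.sum_le_sum fun i _ => ?_
  rw [Finset.mul_sum, Finset.mul_sum, ← Finset.sum_add_distrib]
  refine Finset.sum_le_sum fun j _ => ?_
  have hn := Complex.normSq_nonneg ((Vᴴ * W) i j)
  rcases eq_or_lt_of_le (hz j) with h | h
  · have h3 : Matrix.diagonal (fun i => ((y i : ℝ) : ℂ)) * (Vᴴ * W) *
        Matrix.diagonal (fun j => (((if z j = 0 then 1 else 0 : ℝ)) : ℂ)) = 0 := by
      have := congrArg (fun M => Vᴴ * M * W) hsupp
      simp only [mul_zero, zero_mul] at this
      rw [← this]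
      unfold DD
      calc _ = (Vᴴ * V) * Matrix.diagonal (fun i => ((y i : ℝ) : ℂ)) * (Vᴴ * W) *
        Matrix.diagonal (fun j => (((if z j = 0 then 1 else 0 : ℝ)) : ℂ)) * (Wᴴ * W) := by
            rw [hV', hW', one_mul, mul_one]
        _ = _ := by simp only [mul_assoc]
    have h4 := congrFun (congrFun h3 i) j
    rw [mul_diagonal, diagonal_mul] at h4
    simp only [← h, if_true, Complex.ofReal_one, mul_one, Matrix.zero_apply, mul_eq_zero] at h4
    rcases h4 with h4 | h4
    · have : y i = 0 := by exact_mod_cast h4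
      rw [this, ← h, Real.zero_rpow (by positivity)]; simp
    · rw [h4]; simp
  · have := mul_le_mul_of_nonneg_right (young p (y i) (z j) hp0 hp1 (hy i) h) hn
    linarith

theorem stmt13 {m n : ℕ} (p : ℝ) (hp0 : 0 < p) (hp1 : p < 1)
    (Φ : Matrix (Fin m) (Fin m) ℂ →ₗ[ℂ] Matrix (Fin n) (Fin n) ℂ)
    (Ψ : Matrix (Fin n) (Fin n) ℂ →ₗ[ℂ] Matrix (Fin m) (Fin m) ℂ)
    (hΦ : IsSchwarz Φ) (hunital : Φ 1 = 1) (hadj : IsHSAdjoint Φ Ψ)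
    (A : Matrix (Fin n) (Fin n) ℂ) (hA : A.PosDef)
    (B : Matrix (Fin n) (Fin n) ℂ) (hB : IsUnit B) :
    (mpow (Bᴴ * mpow A (-p) * B) (1 / (2 - p))).trace.re ≥
      (mpow ((Ψ B)ᴴ * mpow (Ψ A) (-p) * Ψ B) (1 / (2 - p))).trace.re := by
  have h2 : 0 < 2 - p := by linarith
  obtain ⟨U, a, hU1, hU2, hAU, hAp, -, ha⟩ := spec A hA.1
  have ha := ha hA
  have hΨA := psi_psd Φ Ψ hΦ hadj A hA.posSemidef
  obtain ⟨U', a', hU1', hU2', hAU', hAp', ha', -⟩ := spec (Ψ A) hΨA.1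
  have ha' := ha' hΨA
  rw [hAp (-p), hAp' (-p)]
  have hY : (Bᴴ * DD U (fun i => a i ^ (-p)) * B).PosDef := by
    have hD : (DD U (fun i => a i ^ (-p))).PosDef := by
      unfold DD
      have hUu : IsUnit U := IsUnit.of_mul_eq_one _ hU2
      rw [← star_eq_conjTranspose, hUu.posDef_star_right_conjugate_iff, posDef_diagonal_iff]
      intro i
      have := Real.rpow_pos_of_pos (ha i) (-p)
      exact_mod_cast this
    rw [← star_eq_conjTranspose, hB.posDef_star_left_conjugate_iff]
    exact hD
  have hY' : ((Ψ B)ᴴ * DD U' (fun i => a' i ^ (-p)) * Ψ B).PosSemidef :=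
    (DD_posSemidef _ _ fun i => Real.rpow_nonneg (ha' i) _).conjTranspose_mul_mul_same _
  obtain ⟨V, y, hV1, hV2, hYV, hYp, -, hy⟩ := spec _ hY.1
  obtain ⟨V', y', hV1', hV2', hYV', hYp', hy', -⟩ := spec _ hY'.1
  have hy := hy hY
  have hy' := hy' hY'
  rw [hYp, hYp', DD_trace V hV1, DD_trace V' hV1']
  set q := 1 / (2 - p) with hq
  set z : Fin n → ℝ := fun i => y i ^ q with hz
  have hz0 : ∀ i, 0 < z i := fun i => Real.rpow_pos_of_pos (hy i) _
  have hZpsd := DD_posSemidef V z fun i => (hz0 i).le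
  have hΨZ := psi_psd Φ Ψ hΦ hadj _ hZpsd
  obtain ⟨W', z', hW1', hW2', hZW', -, hz', -⟩ := spec _ hΨZ.1
  have hz' := hz' hΨZ
  -- traces
  have htr : ∑ j, z' j = ∑ i, z i := by
    rw [← DD_trace W' hW1', ← DD_trace V hV1, ← hZW']
    have := hadj (DD V z) 1
    rw [hunital, mul_one, mul_one, hZpsd.1.eq, hΨZ.1.eq] at this
    rw [this]
  -- support
  have hsupp0 : Ψ B * DD W' (fun j => if z' j = 0 then 1 else 0) = 0 := by
    set P := DD W' (fun j => if z' j = 0 then (1 : ℝ) else 0) with hP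
    have hPP : P * P = P := by
      rw [hP, DD_mul W' hW1']; congr 1; ext j; simp
    have hPZ : P * Ψ (DD V z) = 0 := by
      rw [hZW', hP, DD_mul W' hW1']
      have : (fun i => (if z' i = 0 then (1:ℝ) else 0) * z' i) = fun _ => 0 := by
        ext j; split_ifs with h <;> simp [h]
      rw [this]; simp [DD]
    have hf := form2 Φ Ψ hΦ hadj _ hZpsd (Ψ B * P)
    rw [mul_assoc (Ψ B * P)ᴴ, mul_assoc (Ψ B), hPZ, mul_zero, mul_zero, trace_zero, Complex.zero_re] at hf
    have e := form_eq (Φ (Ψ B * P)) 1 V (fun _ => 1) z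
    rw [DD_one 1 (by simp), mul_one] at e
    rw [e] at hf
    have hΦ0 : (1 : Matrix (Fin n) (Fin n) ℂ)ᴴ * Φ (Ψ B * P) * V = 0 := by
      have hnn : ∀ i j, 0 ≤ 1 * z j * Complex.normSq (((1 : Matrix (Fin n) (Fin n) ℂ)ᴴ * Φ (Ψ B * P) * V) i j) :=
        fun i j => mul_nonneg (by linarith [hz0 j]) (Complex.normSq_nonneg _)
      have h0 := le_antisymm hf (Finset.sum_nonneg fun i _ => Finset.sum_nonneg fun j _ => hnn i j)
      ext i j
      have h3 := (Finset.sum_eq_zero_iff_of_nonneg (fun i _ => Finset.sum_nonneg fun j _ => hnn i j)).1 h0 i (Finset.mem_univ i)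
      have h4 := (Finset.sum_eq_zero_iff_of_nonneg (fun j _ => hnn i j)).1 h3 j (Finset.mem_univ j)
      simpa [(hz0 j).ne'] using h4
    have hΦ1 : Φ (Ψ B * P) = 0 := by
      calc _ = ((1 : Matrix (Fin n) (Fin n) ℂ)ᴴ * Φ (Ψ B * P) * V) * Vᴴ := by
            rw [mul_assoc _ V, hV2]; simp
        _ = 0 := by rw [hΦ0, zero_mul]
    have h5 := hadj B (Ψ B * P)
    rw [hΦ1, mul_zero, trace_zero] at h5
    rw [← trace_conjTranspose_mul_self_eq_zero_iff, conjTranspose_mul, DD_herm, mul_assoc,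
      trace_mul_comm, mul_assoc, mul_assoc, hPP, ← h5]
  have hsupp : DD V' y' * DD W' (fun j => if z' j = 0 then 1 else 0) = 0 := by
    rw [← hYV', mul_assoc, hsupp0, mul_zero]
  have hyoung := young_trace p hp0 hp1 V' W' hV2' hW2' hV1' hW1' y' z' hy' hz' hsupp
  rw [← hq, htr] at hyoung
  -- value on the left
  have hN : (Bᴴ * DD U (fun i => a i ^ (-p)) * B * DD V (fun i => z i ^ (p - 1))).trace.re = ∑ i, z i := by
    rw [hYV, DD_mul V hV1, DD_trace V hV1]
    refine Finset.sum_congr rfl fun i _ => ?_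
    simp only [hz]
    rw [← Real.rpow_mul (hy i).le]
    nth_rewrite 1 [← Real.rpow_one (y i)]
    rw [← Real.rpow_add (hy i)]
    congr 1
    rw [hq]; field_simp; ring
  -- monotonicity
  have hmono : ((Ψ B)ᴴ * DD U' (fun i => a' i ^ (-p)) * Ψ B * DD W' (fun i => z' i ^ (p - 1))).trace.re
      ≤ (Bᴴ * DD U (fun i => a i ^ (-p)) * B * DD V (fun i => z i ^ (p - 1))).trace.re := by
    set X := DD U' (fun i => a' i ^ (-p)) * Ψ B * DD W' (fun i => z' i ^ (p - 1)) with hX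
    have hXc : ∀ i j, (U'ᴴ * X * W') i j = ((a' i ^ (-p) * z' j ^ (p - 1) : ℝ) : ℂ) * (U'ᴴ * Ψ B * W') i j := by
      intro i j
      have : U'ᴴ * X * W' = Matrix.diagonal (fun i => ((a' i ^ (-p) : ℝ) : ℂ)) * (U'ᴴ * Ψ B * W') *
          Matrix.diagonal (fun i => ((z' i ^ (p - 1) : ℝ) : ℂ)) := by
        rw [hX]; unfold DD
        calc _ = (U'ᴴ * U') * Matrix.diagonal (fun i => ((a' i ^ (-p) : ℝ) : ℂ)) * (U'ᴴ * Ψ B * W') *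
          Matrix.diagonal (fun i => ((z' i ^ (p - 1) : ℝ) : ℂ)) * (W'ᴴ * W') := by simp only [mul_assoc]
          _ = _ := by rw [hU1', hW1', one_mul, mul_one]
      rw [this, mul_diagonal, diagonal_mul]
      push_cast; ring
    have eN' := form_eq (Ψ B) U' W' (fun i => a' i ^ (-p)) (fun i => z' i ^ (p - 1))
    have eN := form_eq B U V (fun i => a i ^ (-p)) (fun i => z i ^ (p - 1))
    have eI : ((Ψ B)ᴴ * DD U' (fun i => a' i ^ (-p)) * Ψ B * DD W' (fun i => z' i ^ (p - 1))).trace.re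
        = (Bᴴ * Φ X).trace.re := by
      rw [hadj, hX]; simp only [mul_assoc]
    have eI2 := inner_eq B (Φ X) U V hU2 hV2
    have hl := lieb p hp0 hp1 Φ Ψ hΦ hadj U V hU2 hV2 a z (fun i => (ha i).le) (fun i => (hz0 i).le)
      U' W' hU2' hW2' hU1' hW1' a' z' ha' hz' (by rw [← hAU]; exact hAU') hZW' X
    have eJ : ∑ i, ∑ j, a' i ^ p * z' j ^ (1 - p) * Complex.normSq ((U'ᴴ * X * W') i j)
        = ∑ i, ∑ j, a' i ^ (-p) * z' j ^ (p - 1) * Complex.normSq ((U'ᴴ * Ψ B * W') i j) := by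
      refine Finset.sum_congr rfl fun i _ => Finset.sum_congr rfl fun j _ => ?_
      rw [hXc, Complex.normSq_mul, Complex.normSq_ofReal]
      rcases eq_or_lt_of_le (ha' i) with h | h
      · rw [← h, Real.zero_rpow hp0.ne', Real.zero_rpow (by linarith)]; simp
      rcases eq_or_lt_of_le (hz' j) with h' | h'
      · rw [← h', Real.zero_rpow (by linarith : 1 - p ≠ 0), Real.zero_rpow (by linarith : p - 1 ≠ 0)]; simp
      have e1 : a' i ^ p * a' i ^ (-p) = 1 := by rw [← Real.rpow_add h]; simp
      have e2 : z' j ^ (1 - p) * z' j ^ (p - 1) = 1 := by rw [← Real.rpow_add h']; simp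
      linear_combination (a' i ^ (-p) * z' j ^ (p - 1) * Complex.normSq ((U'ᴴ * Ψ B * W') i j)) *
        (z' j ^ (1 - p) * z' j ^ (p - 1) * e1 + e2)
    have hCS : 2 * (Bᴴ * Φ X).trace.re ≤
        (Bᴴ * DD U (fun i => a i ^ (-p)) * B * DD V (fun i => z i ^ (p - 1))).trace.re +
        ∑ i, ∑ j, a i ^ p * z j ^ (1 - p) * Complex.normSq ((Uᴴ * Φ X * V) i j) := by
      rw [eI2, eN, Finset.mul_sum, ← Finset.sum_add_distrib]
      refine Finset.sum_le_sum fun i _ => ?_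
      rw [Finset.mul_sum, ← Finset.sum_add_distrib]
      refine Finset.sum_le_sum fun j _ => ?_
      generalize (Uᴴ * B * V) i j = b
      generalize (Uᴴ * Φ X * V) i j = x
      have e1 : a i ^ p * a i ^ (-p) = 1 := by rw [← Real.rpow_add (ha i)]; simp
      have e2 : z j ^ (1 - p) * z j ^ (p - 1) = 1 := by rw [← Real.rpow_add (hz0 j)]; simp
      have hw : 0 < a i ^ p * z j ^ (1 - p) :=
        mul_pos (Real.rpow_pos_of_pos (ha i) _) (Real.rpow_pos_of_pos (hz0 j) _)
      have hinv : a i ^ (-p) * z j ^ (p - 1) = (a i ^ p * z j ^ (1 - p))⁻¹ := by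
        apply eq_inv_of_mul_eq_one_left
        linear_combination z j ^ (1 - p) * z j ^ (p - 1) * e1 + e2
      rw [hinv]
      generalize a i ^ p * z j ^ (1 - p) = w at hw
      have : w⁻¹ * Complex.normSq b + w * Complex.normSq x - 2 * (b.re * x.re + b.im * x.im)
          = w⁻¹ * ((b.re - w * x.re) ^ 2 + (b.im - w * x.im) ^ 2) := by
        simp only [Complex.normSq_apply]; field_simp; ring
      have h3 : 0 ≤ w⁻¹ * ((b.re - w * x.re) ^ 2 + (b.im - w * x.im) ^ 2) := by positivity
      linarith
    rw [eJ, ← eN'] at hl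
    rw [← eI] at hCS
    linarith
  rw [hYV', hN] at hmono
  have hq0 : 0 < q := by positivity
  have := mul_le_mul_of_nonneg_left hmono hq0.le
  show _ ≤ ∑ i, z i
  linarith
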